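/- If a subshift X ⊆ Σ^G with safe symbol 0 is an SFT, then X is uniformly avo for the family of all subsets of G \ {e}: there is a single radius r such that for every C ⊆ G \ {e}, the set C ∩ B_r is determining for C. -/

import Mathlib

open scoped Pointwise

/-- `B` is a determining set for `C`. -/
def IsDetermining {G A : Type*} [Group G] (X : Set (G → A)) (C B : Set G) : Prop :=
  ∀ x : G → A, (∃ w ∈ X, ∀ g ∈ C, w g = x g) →
    ∀ a : A, (∃ w ∈ X, (∀ g ∈ B, w g = x g) ∧ w 1 = a) ↔
      (∃ w ∈ X, (∀ g ∈ C, w g = x g) ∧ w 1 = a)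

/-- If a subshift `X ⊆ A^G` with safe symbol `z` is an SFT, then `X` is uniformly avo
for the family of all subsets of `G \ {e}`: there is a single radius `r` such that for
every `C ⊆ G \ {e}`, the set `C ∩ B_r` is determining for `C`. Here `S` is a finite
symmetric generating set containing the identity, and `S ^ r` is the `r`-ball of the
word metric. -/
theorem safe_symbol_SFT_uniformly_avo {G A : Type*} [Group G] [Finite A]
    [TopologicalSpace A] [DiscreteTopology A]
    (S : Set G) (hS1 : (1 : G) ∈ S) (hSinv : S⁻¹ = S) (hSfin : S.Finite)
    (hSgen : ∀ g : G, ∃ n : ℕ, g ∈ S ^ n)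
    (X : Set (G → A)) (hclosed : IsClosed X)
    (hshift : ∀ g : G, ∀ x ∈ X, (fun h => x (g⁻¹ * h)) ∈ X)
    (z : A) (hsafe : ∀ y : G → A, (∃ x ∈ X, ∀ g : G, y g = x g ∨ y g = z) → y ∈ X)
    (hSFT : ∃ (n : ℕ) (D : Fin n → Finset G) (p : Fin n → G → A),
      X = {x : G → A | ∀ (g : G) (i : Fin n), ∃ h ∈ D i, x (g * h) ≠ p i h}) :
    ∃ r : ℕ, ∀ C : Set G, (1 : G) ∉ C → IsDetermining X C (C ∩ S ^ r) := by
  classical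
  obtain ⟨n, D, p, hX⟩ := hSFT
  choose f hf using hSgen
  let T : Finset G := Finset.univ.biUnion fun i =>
    (D i ×ˢ D i).image fun q : G × G => q.1⁻¹ * q.2
  refine ⟨T.sup f, ?_⟩
  have hr : ∀ i, ∀ h ∈ D i, ∀ k ∈ D i, h⁻¹ * k ∈ S ^ (T.sup f) := by
    intro i h hh k hk
    have hT : h⁻¹ * k ∈ T :=
      Finset.mem_biUnion.2 ⟨i, Finset.mem_univ _,
        Finset.mem_image.2 ⟨(h, k), Finset.mem_product.2 ⟨hh, hk⟩, rfl⟩⟩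
    exact Set.pow_subset_pow_right hS1 (Finset.le_sup (f := f) hT) (hf _)
  generalize T.sup f = r at hr
  intro C hC x hx a
  obtain ⟨u, hu, hux⟩ := hx
  constructor
  · rintro ⟨w, hw, hwx, hwa⟩
    have h1 : (fun g => if g ∈ C ∩ S ^ r ∨ g = 1 then w g else z) ∈ X := by
      refine hsafe _ ⟨w, hw, fun g => ?_⟩
      split_ifs <;> simp
    have h2 : (fun g => if g ∈ C then u g else z) ∈ X := by
      refine hsafe _ ⟨u, hu, fun g => ?_⟩
      split_ifs <;> simp
    refine ⟨fun g => if g = 1 then a else if g ∈ C then x g else z, ?_, ?_, by simp⟩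
    · rw [hX] at h1 h2 ⊢
      intro g i
      by_cases hg : ∃ h ∈ D i, g * h = 1
      · obtain ⟨h, hh, hgh⟩ := hg
        obtain ⟨k, hk, hne⟩ := h1 g i
        refine ⟨k, hk, ?_⟩
        have hmem : g * k ∈ S ^ r := by
          rw [eq_inv_of_mul_eq_one_left hgh]
          exact hr i h hh k hk
        convert hne using 1
        dsimp only
        by_cases e1 : g * k = 1
        · simp [e1, hwa]
        · by_cases e2 : g * k ∈ C
          · simp [e1, e2, hmem, hwx _ ⟨e2, hmem⟩]
          · simp [e1, e2]
      · obtain ⟨k, hk, hne⟩ := h2 g i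
        refine ⟨k, hk, ?_⟩
        have e1 : g * k ≠ 1 := fun e => hg ⟨k, hk, e⟩
        convert hne using 1
        dsimp only
        by_cases e2 : g * k ∈ C
        · simp [e1, e2, hux _ e2]
        · simp [e1, e2]
    · intro g hg
      have : g ≠ 1 := fun e => hC (e ▸ hg)
      simp [this, hg]
  · rintro ⟨w, hw, hwx, hwa⟩
    exact ⟨w, hw, fun g hg => hwx g hg.1, hwa⟩
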